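/- arXiv:2410.21700 — 2 statements merged into one kernel-verified Lean document; each statement's English description precedes it below -/
import Mathlib

section
/- Let λ > 1, let α be Diophantine, and let θ ∈ ℝ satisfy 0 < δ(α,θ) < ln λ. Then the almost Mathieu operator H_{λ,α,θ} does not have SULE. -/
noncomputable section

open Filter Real

def distToInt (x : ℝ) : ℝ := |x - round x|

def IsDiophantine (α : ℝ) : Prop :=
  ∃ κ τ : ℝ, 0 < κ ∧ 0 < τ ∧ ∀ k : ℤ, k ≠ 0 → τ / |(k : ℝ)| ^ κ ≤ distToInt (k * α)

def deltaPhase (α θ : ℝ) : ℝ :=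
  limsup (fun n : ℤ => -Real.log (distToInt (2 * θ + n * α)) / |(n : ℝ)|) cofinite

def amoPot (lam α θ : ℝ) : ℤ → ℝ := fun n => 2 * lam * Real.cos (2 * Real.pi * (θ + n * α))

def IsEigenfunction (g : ℤ → ℝ) (E : ℝ) (φ : ℤ → ℝ) : Prop :=
  ∀ n : ℤ, φ (n + 1) + φ (n - 1) + g n * φ n = E * φ n

def deltaPot (g : ℤ → ℝ) : ℝ :=
  limsup (fun n : ℤ => -Real.log (⨆ m : ℤ, |g (n - m) - g m|) / |(n : ℝ)|) cofinite

def matNorm (M : Matrix (Fin 2) (Fin 2) ℝ) : ℝ := ⨆ p : Fin 2 × Fin 2, |M p.1 p.2|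

def transfer (g : ℤ → ℝ) (E : ℝ) : ℕ → ℤ → Matrix (Fin 2) (Fin 2) ℝ
  | 0, _ => 1
  | n + 1, k => !![E - g (k + n), -1; 1, 0] * transfer g E n k

def LyapSup (g : ℤ → ℝ) (E : ℝ) : ℝ :=
  limsup (fun n : ℕ => ⨆ k : ℤ, Real.log (matNorm (transfer g E n k)) / n) atTop

def HasSULE (g : ℤ → ℝ) : Prop :=
  ∃ (Φ : HilbertBasis ℕ ℝ (lp (fun _ : ℤ => ℝ) 2)) (ns : ℕ → ℤ) (γ : ℝ),
    0 < γ ∧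
    (∀ s : ℕ, ∃ E : ℝ, IsEigenfunction g E (fun n => Φ s n)) ∧
    ∀ ε : ℝ, 0 < ε → ∃ C : ℝ,
      ∀ (s : ℕ) (n : ℤ),
        |Φ s n| ≤ C * Real.exp (ε * |(ns s : ℝ)|) * Real.exp (-γ * |(n : ℝ) - (ns s : ℝ)|)

lemma amo_abs_le_one (φ : ℤ → ℝ) (hs : HasSum (fun j => φ j ^ 2) 1) (j : ℤ) : |φ j| ≤ 1 := by
  have := le_hasSum hs j (fun i _ => sq_nonneg _)
  exact (sq_le_one_iff_abs_le_one _).1 this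

lemma amo_tendsto (φ : ℤ → ℝ) (hs : HasSum (fun j => φ j ^ 2) 1) :
    Tendsto φ cofinite (nhds 0) := by
  have h := hs.summable.tendsto_cofinite_zero
  have h2 := h.sqrt
  simp only [Real.sqrt_sq_eq_abs, Real.sqrt_zero] at h2
  exact (tendsto_zero_iff_abs_tendsto_zero _).2 h2

lemma amo_wronsk (g φ : ℤ → ℝ) (E : ℝ) (n : ℤ) (β : ℝ) (hβ0 : 0 ≤ β)
    (he : IsEigenfunction g E φ) (hs : HasSum (fun j => φ j ^ 2) 1)
    (hβ : ∀ j, |g (n - j) - g j| ≤ β) (p : ℤ) :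
    |φ (p+1) * φ (n - p) - φ p * φ (n - (p+1))| ≤ β := by
  set W : ℤ → ℝ := fun j => φ (j+1) * φ (n - j) - φ j * φ (n - (j+1)) with hW
  have hstep : ∀ j, W (j+1) - W j = (g (n - (j+1)) - g (j+1)) * (φ (j+1) * φ (n - (j+1))) := by
    intro j
    have h1 := he (j+1)
    have h2 := he (n - (j+1))
    have e1 : j + 1 - 1 = j := by ring
    have e2 : n - (j+1) + 1 = n - j := by ring
    have e3 : n - (j+1) - 1 = n - (j+1+1) := by ring
    rw [e1] at h1
    rw [e2, e3] at h2
    simp only [hW]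
    linear_combination φ (n-(j+1)) * h1 - φ (j+1) * h2
  have hsr : HasSum (fun j => φ (n - j) ^ 2) 1 := by
    have := (Equiv.subLeft n).hasSum_iff.2 hs
    simpa [Function.comp_def] using this
  have hprod : ∀ S : Finset ℤ, ∑ j ∈ S, |φ j * φ (n - j)| ≤ 1 := by
    intro S
    have h1 := sum_le_hasSum S (fun i _ => sq_nonneg (φ i)) hs
    have h2 := sum_le_hasSum S (fun i _ => sq_nonneg (φ (n - i))) hsr
    have h3 : ∑ j ∈ S, |φ j * φ (n - j)| ≤ ∑ j ∈ S, (φ j ^ 2 + φ (n-j)^2) / 2 := by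
      apply Finset.sum_le_sum
      intro j _
      rw [abs_mul]
      nlinarith [sq_nonneg (|φ j| - |φ (n-j)|), sq_abs (φ j), sq_abs (φ (n-j))]
    rw [← Finset.sum_div, Finset.sum_add_distrib] at h3
    linarith
  have hdiff : ∀ T : ℕ, |W (p + T) - W p| ≤ β * ∑ i ∈ Finset.range T, |φ (p+1+i) * φ (n - (p+1+i))| := by
    intro T
    induction T with
    | zero => simp
    | succ T ih =>
      rw [Finset.sum_range_succ, mul_add]
      have h := hstep (p + T)
      have e : p + (T:ℤ) + 1 = p + 1 + T := by ring
      have e' : p + ((T+1 : ℕ):ℤ) = p + T + 1 := by push_cast; ring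
      rw [e']
      have h3 : |W (p+T+1) - W (p+T)| ≤ β * |φ (p+1+T) * φ (n - (p+1+T))| := by
        rw [h, abs_mul, e]
        exact mul_le_mul_of_nonneg_right (hβ _) (abs_nonneg _)
      have := abs_sub_le (W (p+T+1)) (W (p+T)) (W p)
      linarith
  have hdiff2 : ∀ T : ℕ, |W (p + T) - W p| ≤ β := by
    intro T
    refine (hdiff T).trans ?_
    have : ∑ i ∈ Finset.range T, |φ (p+1+i) * φ (n - (p+1+i))| ≤ 1 := by
      have h := hprod ((Finset.range T).map ⟨fun i : ℕ => p + 1 + (i:ℤ), fun a b hab => by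
        simpa using hab⟩)
      rw [Finset.sum_map] at h
      exact h
    nlinarith
  have h0 := amo_tendsto φ hs
  have hW0 : Tendsto W cofinite (nhds 0) := by
    have a1 : Tendsto (fun j : ℤ => φ (j+1)) cofinite (nhds 0) :=
      h0.comp (add_left_injective 1).tendsto_cofinite
    have a2 : Tendsto (fun j : ℤ => φ (n - j)) cofinite (nhds 0) :=
      h0.comp (sub_right_injective (b := n)).tendsto_cofinite
    have a3 : Tendsto (fun j : ℤ => φ (n - (j+1))) cofinite (nhds 0) :=
      a2.comp (add_left_injective 1).tendsto_cofinite
    simpa [hW] using (a1.mul a2).sub (h0.mul a3)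
  have hWT : Tendsto (fun T : ℕ => W (p + T)) atTop (nhds 0) := by
    rw [← Nat.cofinite_eq_atTop]
    exact hW0.comp (Function.Injective.tendsto_cofinite (fun a b hab => by simpa using hab))
  have hlim : Tendsto (fun T : ℕ => |W (p + T) - W p|) atTop (nhds |0 - W p|) :=
    (hWT.sub_const _).abs
  have := le_of_tendsto' hlim hdiff2
  simpa using this

lemma amo_min {x y b : ℝ} (hb : 0 ≤ b) (h : |x * y| ≤ b ^ 2) : |x| ≤ b ∨ |y| ≤ b := by
  by_contra! hc
  rw [abs_mul] at h
  nlinarith [hc.1, hc.2]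

lemma amo_refl (g φ : ℤ → ℝ) (E L : ℝ) (n : ℤ) (b : ℝ) (hb0 : 0 ≤ b)
    (he : IsEigenfunction g E φ) (hs : HasSum (fun j => φ j ^ 2) 1)
    (hL1 : 1 ≤ L) (hL : ∀ j, |E - g j| ≤ L)
    (hβ : ∀ j, |g (n - j) - g j| ≤ b ^ 2) (t : ℕ) :
    |φ (n / 2 + t)| ≤ |φ (n - (n / 2 + t))| + (L + 2) ^ (t + 1) * b := by
  have hL0 : 0 ≤ L := (abs_nonneg _).trans (hL 0)
  have hQ1 : 1 ≤ (L + 2) ^ (t + 1) := one_le_pow₀ (by linarith)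
  by_cases hb1 : 1 < b
  · have := amo_abs_le_one φ hs (n / 2 + t)
    have := abs_nonneg (φ (n - (n / 2 + t)))
    nlinarith
  push Not at hb1
  have hbb : b ^ 2 ≤ b := by nlinarith
  set p := n / 2 with hp
  have hW := amo_wronsk g φ E n (b^2) (sq_nonneg _) he hs hβ p
  have hmain : ∃ σ : ℝ, |σ| = 1 ∧ |φ p - σ * φ (n - p)| ≤ (L + 1) * b ∧
      |φ (p+1) - σ * φ (n - (p+1))| ≤ (L + 1) * b := by
    have hLb : 0 ≤ L * b := by positivity
    rcases Int.even_or_odd' n with ⟨q, hq | hq⟩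
    · have hpq : p = q := by omega
      have e1 : n - p = p := by omega
      have e2 : n - (p+1) = p - 1 := by omega
      rw [e1, e2] at hW ⊢
      rw [show φ (p+1) * φ p - φ p * φ (p-1) = φ p * (φ (p+1) - φ (p-1)) by ring] at hW
      rcases amo_min hb0 hW with h | h
      · have hep := he p
        have k1 : φ (p+1) - -1 * φ (p-1) = (E - g p) * φ p := by linear_combination hep
        have k2 : |(E - g p) * φ p| ≤ L * b := by
          rw [abs_mul]; exact mul_le_mul (hL p) h (abs_nonneg _) hL0
        refine ⟨-1, by simp, ?_, ?_⟩
        · rw [show φ p - -1 * φ p = 2 * φ p by ring, abs_mul, abs_two]; nlinarith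
        · rw [k1]; linarith
      · refine ⟨1, by simp, by simp; nlinarith, by rw [one_mul]; linarith⟩
    · have hpq : p = q := by omega
      have e1 : n - p = p + 1 := by omega
      have e2 : n - (p+1) = p := by omega
      rw [e1, e2] at hW ⊢
      rw [show φ (p+1) * φ (p+1) - φ p * φ p = (φ (p+1) - φ p) * (φ (p+1) + φ p) by ring] at hW
      rcases amo_min hb0 hW with h | h
      · refine ⟨1, by simp, ?_, ?_⟩
        · rw [one_mul, abs_sub_comm]; linarith
        · rw [one_mul]; linarith
      · refine ⟨-1, by simp, ?_, ?_⟩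
        · rw [show φ p - -1 * φ (p+1) = φ (p+1) + φ p by ring]; linarith
        · rw [show φ (p+1) - -1 * φ p = φ (p+1) + φ p by ring]; linarith
  obtain ⟨σ, hσ, hA, hB⟩ := hmain
  set D : ℤ → ℝ := fun j => φ j - σ * φ (n - j) with hD
  have hrec : ∀ j, |D (j+1+1)| ≤ L * |D (j+1)| + |D j| + b := by
    intro j
    have h1 := he (j+1)
    have h2 := he (n - (j+1))
    have e1 : j + 1 - 1 = j := by ring
    have e2 : n - (j+1) + 1 = n - j := by ring
    have e3 : n - (j+1) - 1 = n - (j+1+1) := by ring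
    rw [e1] at h1
    rw [e2, e3] at h2
    have h3 : D (j+1+1) = (E - g (j+1)) * D (j+1) - D j
        + σ * ((g (n - (j+1)) - g (j+1)) * φ (n - (j+1))) := by
      simp only [hD]
      linear_combination h1 - σ * h2
    have t1 : |(E - g (j+1)) * D (j+1)| ≤ L * |D (j+1)| := by
      rw [abs_mul]; exact mul_le_mul_of_nonneg_right (hL _) (abs_nonneg _)
    have t2 : |σ * ((g (n - (j+1)) - g (j+1)) * φ (n - (j+1)))| ≤ b := by
      rw [abs_mul, hσ, one_mul, abs_mul]
      have := hβ (j+1)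
      have := amo_abs_le_one φ hs (n - (j+1))
      have := abs_nonneg (φ (n - (j+1)))
      have := abs_nonneg (g (n - (j+1)) - g (j+1))
      nlinarith
    rw [h3]
    have := abs_add_le ((E - g (j+1)) * D (j+1) - D j) (σ * ((g (n - (j+1)) - g (j+1)) * φ (n - (j+1))))
    have := abs_sub ((E - g (j+1)) * D (j+1)) (D j)
    linarith
  have hind : ∀ t : ℕ, |D (p + t)| + b ≤ (L+2)^(t+1) * b ∧ |D (p + t + 1)| + b ≤ (L+2)^(t+1) * b := by
    intro t
    induction t with
    | zero => 
      constructor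
      · simp only [Nat.cast_zero, add_zero, zero_add, pow_one]; linarith
      · simp only [Nat.cast_zero, add_zero, zero_add, pow_one]; linarith
    | succ t ih =>
      obtain ⟨i1, i2⟩ := ih
      have e' : p + ((t+1 : ℕ):ℤ) = p + t + 1 := by push_cast; ring
      rw [e']
      have hr := hrec (p + t)
      set X := (L+2)^(t+1) * b with hX
      have hXX : (L+2)^(t+1+1) * b = (L+2) * X := by rw [hX]; ring
      have := abs_nonneg (D (p+t+1))
      have hX0 : 0 ≤ X := by positivity
      have : 0 ≤ L * X := by positivity
      rw [hXX]
      constructor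
      · nlinarith
      · have : L * |D (p+t+1)| ≤ L * (X - b) := mul_le_mul_of_nonneg_left (by linarith) hL0
        have : 0 ≤ L * b := by positivity
        nlinarith
  have h1 := (hind t).1
  have h2 : |φ (p+t)| ≤ |D (p+t)| + |σ * φ (n - (p+t))| := by
    have := abs_add_le (D (p+t)) (σ * φ (n - (p+t)))
    simpa [hD] using this
  rw [abs_mul, hσ, one_mul] at h2
  linarith

lemma amo_pot_close (lam α θ : ℝ) (hlam : 0 < lam) (n j : ℤ) :
    |amoPot lam α θ (n - j) - amoPot lam α θ j| ≤ 4 * Real.pi * lam * distToInt (2 * θ + n * α) := by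
  unfold amoPot distToInt
  set k := round (2 * θ + n * α)
  have hc : Real.cos (2 * Real.pi * (θ + j * α)) = Real.cos (k * (2 * Real.pi) - 2 * Real.pi * (θ + j * α)) := by
    rw [Real.cos_int_mul_two_pi_sub]
  rw [← mul_sub, abs_mul, abs_of_pos (by positivity : 0 < 2 * lam), hc]
  have hl : ∀ x y : ℝ, |Real.cos x - Real.cos y| ≤ |x - y| := by
    intro x y
    have := Real.lipschitzWith_cos.dist_le_mul x y
    simpa [Real.dist_eq] using this
  have h := hl (2 * Real.pi * (θ + ((n - j : ℤ) : ℝ) * α)) (k * (2 * Real.pi) - 2 * Real.pi * (θ + j * α))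
  rw [show 2 * Real.pi * (θ + ((n - j : ℤ) : ℝ) * α) - (k * (2 * Real.pi) - 2 * Real.pi * (θ + j * α))
    = 2 * Real.pi * (2 * θ + n * α - k) by push_cast; ring, abs_mul,
    abs_of_pos (by positivity : (0:ℝ) < 2 * Real.pi)] at h
  nlinarith

lemma amo_freq (α θ : ℝ) (hδpos : 0 < deltaPhase α θ) :
    ∃ c : ℝ, 0 < c ∧ ∀ N : ℝ, ∃ n : ℤ, N ≤ |(n:ℝ)| ∧ distToInt (2 * θ + n * α) ≤ Real.exp (-c * |(n:ℝ)|) := by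
  refine ⟨deltaPhase α θ / 2, by linarith, fun N => ?_⟩
  have hd : ∀ x, 0 ≤ distToInt x := fun x => abs_nonneg _
  have hd1 : ∀ x, distToInt x ≤ 1 := fun x => (abs_sub_round x).trans (by norm_num)
  have hf : ∃ᶠ n : ℤ in cofinite, deltaPhase α θ / 2 < -Real.log (distToInt (2 * θ + n * α)) / |(n : ℝ)| := by
    apply frequently_lt_of_lt_limsup
    · apply IsBoundedUnder.isCoboundedUnder_le
      refine isBoundedUnder_of ⟨0, fun n => ?_⟩
      have := Real.log_nonpos (hd (2 * θ + n * α)) (hd1 _)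
      exact div_nonneg (by linarith) (abs_nonneg _)
    · show deltaPhase α θ / 2 < deltaPhase α θ
      linarith
  have hev : ∀ᶠ n : ℤ in cofinite, N ≤ |(n:ℝ)| := by
    rw [eventually_cofinite]
    refine (Set.finite_Icc (-⌈N⌉) ⌈N⌉).subset ?_
    intro n hn
    simp only [Set.mem_ofPred_eq, not_le] at hn
    have h := abs_lt.1 (hn.trans_le (Int.le_ceil N))
    constructor
    · have := h.1; exact_mod_cast this.le
    · have := h.2; exact_mod_cast this.le
  obtain ⟨n, h1, h2⟩ := (hf.and_eventually hev).exists
  refine ⟨n, h2, ?_⟩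
  rcases (abs_nonneg (n:ℝ)).eq_or_lt with h0 | h0
  · rw [← h0, div_zero] at h1; linarith
  rw [lt_div_iff₀ h0] at h1
  rcases (hd (2 * θ + n * α)).eq_or_lt with h3 | h3
  · rw [← h3]; positivity
  · rw [← Real.log_le_iff_le_exp h3]; linarith

lemma amo_E_bound (g φ : ℤ → ℝ) (E G : ℝ)
    (he : IsEigenfunction g E φ) (hs : HasSum (fun j => φ j ^ 2) 1) (hG : ∀ j, |g j| ≤ G) :
    |E| ≤ 4 + 2 * G := by
  have hbd : BddAbove (Set.range fun j => |φ j|) := ⟨1, by rintro _ ⟨j, rfl⟩; exact amo_abs_le_one φ hs j⟩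
  set S := ⨆ j, |φ j| with hS
  have hle : ∀ j, |φ j| ≤ S := fun j => le_ciSup hbd j
  have hSpos : 0 < S := by
    by_contra hc
    have : ∀ j, φ j = 0 := fun j => abs_eq_zero.1 (le_antisymm ((hle j).trans (not_lt.1 hc)) (abs_nonneg _))
    simp only [this] at hs
    have := hs.unique (a₂ := (0:ℝ)) (by simpa using (hasSum_zero : HasSum (fun _ : ℤ => (0:ℝ)) 0))
    norm_num at this
  obtain ⟨j, hj⟩ := exists_lt_of_lt_ciSup (show S / 2 < ⨆ j, |φ j| by rw [← hS]; linarith)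
  have h := he j
  have h1 : |E| * |φ j| ≤ 2 * S + G * S := by
    rw [← abs_mul, ← h]
    have a1 := abs_add_le (φ (j+1) + φ (j-1)) (g j * φ j)
    have a2 := abs_add_le (φ (j+1)) (φ (j-1))
    have a3 : |g j * φ j| ≤ G * S := by
      rw [abs_mul]; exact mul_le_mul (hG j) (hle j) (abs_nonneg _) ((abs_nonneg _).trans (hG j))
    have := hle (j+1)
    have := hle (j-1)
    linarith
  have h2 : |E| * (S/2) ≤ |E| * |φ j| := mul_le_mul_of_nonneg_left hj.le (abs_nonneg _)
  have : |E| * S ≤ (4 + 2 * G) * S := by linarith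
  exact le_of_mul_le_mul_right this hSpos

lemma amo_sum_k (Φ : HilbertBasis ℕ ℝ (lp (fun _ : ℤ => ℝ) 2)) (s : ℕ) :
    HasSum (fun j => (Φ s j) ^ 2) 1 := by
  have h := lp.hasSum_inner (𝕜 := ℝ) (Φ s) (Φ s)
  have h1 : inner ℝ (Φ s) (Φ s) = (1:ℝ) := by
    rw [real_inner_self_eq_norm_sq, Φ.orthonormal.1 s]; norm_num
  rw [h1] at h
  simpa [pow_two] using h

lemma amo_sum_s (Φ : HilbertBasis ℕ ℝ (lp (fun _ : ℤ => ℝ) 2)) (m : ℤ) :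
    HasSum (fun s => (Φ s m) ^ 2) 1 := by
  classical
  have h := Φ.hasSum_inner_mul_inner (lp.single 2 m (1:ℝ)) (lp.single 2 m (1:ℝ))
  have h1 : ∀ s, inner ℝ (lp.single 2 m (1:ℝ)) (Φ s) = Φ s m := by
    intro s
    rw [lp.inner_single_left]; simp
  have h2 : ∀ s, inner ℝ (Φ s) (lp.single 2 m (1:ℝ)) = Φ s m := by
    intro s
    rw [lp.inner_single_right]; simp
  rw [lp.inner_single_left] at h
  simp only [h1, h2] at h
  simpa [pow_two] using h

lemma amo_geom (r : ℝ) (hr : 0 < r) (m : ℤ) :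
    Summable (fun k : ℤ => Real.exp (-r * |(m:ℝ) - k|)) ∧
    ∑' k : ℤ, Real.exp (-r * |(m:ℝ) - k|) = ∑' k : ℤ, Real.exp (-r * |(k:ℝ)|) := by
  have h0 : Summable (fun k : ℤ => Real.exp (-r * |(k:ℝ)|)) := by
    have hn : Summable (fun k : ℕ => Real.exp (-r * (k:ℝ))) := by
      have := summable_geometric_of_lt_one (Real.exp_pos (-r)).le (by rw [← Real.exp_zero]; exact Real.exp_lt_exp.2 (by linarith))
      refine this.congr fun k => ?_
      rw [← Real.exp_nat_mul]; ring_nf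
    apply Summable.of_nat_of_neg <;> simpa using hn
  have e := (Equiv.subLeft m).summable_iff (f := fun k : ℤ => Real.exp (-r * |(k:ℝ)|))
  have e2 := (Equiv.subLeft m).tsum_eq (fun k : ℤ => Real.exp (-r * |(k:ℝ)|))
  constructor
  · have := e.2 h0
    simpa [Function.comp_def] using this
  · simpa using e2

lemma amo_exists (Φ : HilbertBasis ℕ ℝ (lp (fun _ : ℤ => ℝ) 2)) (m : ℤ) (r R μ : ℝ) (hr : 0 < r)
    (hR : 0 ≤ R) (hμ : 0 ≤ μ)
    (hb : ∀ s k, |Φ s m| * |Φ s k| ≤ (R * Real.exp (-r * |(m:ℝ) - k|)) ^ 2)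
    (hlt : μ * R * ∑' k : ℤ, Real.exp (-r * |(k:ℝ)|) < 1) :
    ∃ s, μ ^ 2 < |Φ s m| := by
  by_contra! hc
  obtain ⟨g1, g2⟩ := amo_geom r hr m
  have hterm : ∀ s k, (Φ s m) ^ 2 * (Φ s k) ^ 2 ≤
      μ * R * Real.exp (-r * |(m:ℝ) - k|) * (|Φ s m| * |Φ s k|) := by
    intro s k
    have h1 := hb s k
    have h2 := hc s
    have h3 := amo_abs_le_one _ (amo_sum_k Φ s) k
    have u0 := abs_nonneg (Φ s m)
    have v0 := abs_nonneg (Φ s k)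
    rw [← sq_abs (Φ s m), ← sq_abs (Φ s k)]
    set u := |Φ s m|
    set v := |Φ s k|
    set x := R * Real.exp (-r * |(m:ℝ) - k|) with hx
    have hx0 : 0 ≤ x := by positivity
    have h4 : u * v ≤ μ * x := by
      apply le_of_sq_le_sq _ (by positivity)
      have h5 : u * v ≤ μ ^ 2 := by nlinarith
      calc (u * v) ^ 2 = (u * v) * (u * v) := by ring
        _ ≤ μ ^ 2 * x ^ 2 := mul_le_mul h5 h1 (by positivity) (by positivity)
        _ = (μ * x) ^ 2 := by ring
    calc u ^ 2 * v ^ 2 = (u * v) * (u * v) := by ring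
      _ ≤ μ * x * (u * v) := mul_le_mul_of_nonneg_right h4 (by positivity)
      _ = _ := by rw [hx]; ring
  have hsm : Summable (fun k : ℤ => μ * R * Real.exp (-r * |(m:ℝ) - k|)) := g1.mul_left _
  have hfin : ∀ S : Finset ℕ, ∑ s ∈ S, (Φ s m) ^ 2 ≤ ∑' k : ℤ, μ * R * Real.exp (-r * |(m:ℝ) - k|) := by
    intro S
    have hk : ∀ s, HasSum (fun k => (Φ s m) ^ 2 * (Φ s k) ^ 2) ((Φ s m) ^ 2) := by
      intro s
      simpa using (amo_sum_k Φ s).mul_left ((Φ s m) ^ 2)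
    have hk2 : HasSum (fun k => ∑ s ∈ S, (Φ s m) ^ 2 * (Φ s k) ^ 2) (∑ s ∈ S, (Φ s m) ^ 2) :=
      hasSum_sum (fun s _ => hk s)
    refine hasSum_le (fun k => ?_) hk2 hsm.hasSum
    have h1 : ∑ s ∈ S, (Φ s m) ^ 2 * (Φ s k) ^ 2 ≤
        ∑ s ∈ S, μ * R * Real.exp (-r * |(m:ℝ) - k|) * (|Φ s m| * |Φ s k|) :=
      Finset.sum_le_sum fun s _ => hterm s k
    rw [← Finset.mul_sum] at h1
    have h2 : ∑ s ∈ S, |Φ s m| * |Φ s k| ≤ 1 := by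
      have a1 := sum_le_hasSum S (fun i _ => sq_nonneg _) (amo_sum_s Φ m)
      have a2 := sum_le_hasSum S (fun i _ => sq_nonneg _) (amo_sum_s Φ k)
      have h3 : ∑ j ∈ S, |Φ j m| * |Φ j k| ≤ ∑ j ∈ S, ((Φ j m) ^ 2 + (Φ j k)^2) / 2 := by
        apply Finset.sum_le_sum
        intro j _
        nlinarith [sq_nonneg (|Φ j m| - |Φ j k|), sq_abs (Φ j m), sq_abs (Φ j k)]
      rw [← Finset.sum_div, Finset.sum_add_distrib] at h3
      linarith
    have h3 : 0 ≤ μ * R * Real.exp (-r * |(m:ℝ) - k|) := by positivity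
    exact h1.trans (mul_le_of_le_one_right h3 h2)
  have := hasSum_le_of_sum_le (amo_sum_s Φ m) hfin
  rw [tsum_mul_left, g2] at this
  linarith

lemma amo_semi (Φ : ℕ → ℤ → ℝ) (ns : ℕ → ℤ) (γ ε C : ℝ) (hε : 0 < ε) (hεγ : 4 * ε ≤ γ)
    (h : ∀ (s : ℕ) (n : ℤ),
        |Φ s n| ≤ C * Real.exp (ε * |(ns s : ℝ)|) * Real.exp (-γ * |(n : ℝ) - (ns s : ℝ)|))
    (s : ℕ) (m k : ℤ) :
    |Φ s m| * |Φ s k| ≤ ((|C| + 1) * Real.exp (ε * |(m:ℝ)|) * Real.exp (-(γ/4) * |(m:ℝ) - k|)) ^ 2 := by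
  have h' : ∀ j : ℤ, |Φ s j| ≤ (|C|+1) * Real.exp (ε * |(ns s : ℝ)| + -γ * |(j : ℝ) - (ns s : ℝ)|) := by
    intro j
    rw [Real.exp_add, ← mul_assoc]
    refine (h s j).trans ?_
    have : C ≤ |C| + 1 := by linarith [le_abs_self C]
    gcongr
  calc |Φ s m| * |Φ s k| ≤ _ := mul_le_mul (h' m) (h' k) (abs_nonneg _) (by positivity)
    _ = (|C|+1)^2 * Real.exp ((ε * |(ns s : ℝ)| + -γ * |(m : ℝ) - (ns s : ℝ)|) +
          (ε * |(ns s : ℝ)| + -γ * |(k : ℝ) - (ns s : ℝ)|)) := by simp only [Real.exp_add]; ring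
    _ ≤ (|C|+1)^2 * Real.exp (2 * (ε * |(m:ℝ)| + -(γ/4) * |(m:ℝ) - k|)) := by
        gcongr
        have t1 : |(ns s : ℝ)| ≤ |(m:ℝ)| + |(m : ℝ) - (ns s : ℝ)| := by
          have := abs_sub (m:ℝ) ((m : ℝ) - (ns s : ℝ))
          simpa using this
        have t2 : |(m:ℝ) - k| ≤ |(m : ℝ) - (ns s : ℝ)| + |(k : ℝ) - (ns s : ℝ)| := by
          have := abs_sub ((m : ℝ) - (ns s : ℝ)) ((k : ℝ) - (ns s : ℝ))
          simpa using this
        have p1 := abs_nonneg ((m : ℝ) - (ns s : ℝ))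
        have p2 := abs_nonneg ((k : ℝ) - (ns s : ℝ))
        have q1 := mul_le_mul_of_nonneg_left t1 hε.le
        have q2 := mul_le_mul_of_nonneg_left t2 (by linarith : 0 ≤ γ)
        have q3 := mul_le_mul_of_nonneg_right hεγ p1
        have q4 := mul_nonneg (by linarith : 0 ≤ γ) p2
        linarith
    _ = _ := by
        rw [two_mul, Real.exp_add, Real.exp_add]; ring

lemma amo_step (lam α θ : ℝ) (hlam : 1 < lam) (Φ : HilbertBasis ℕ ℝ (lp (fun _ : ℤ => ℝ) 2))
    (he : ∀ s : ℕ, ∃ E : ℝ, IsEigenfunction (amoPot lam α θ) E (fun n => Φ s n))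
    (n : ℤ) (c : ℝ) (hn : distToInt (2 * θ + n * α) ≤ Real.exp (-c * |(n:ℝ)|)) (s : ℕ) (t : ℕ) :
    |Φ s (n / 2 + t)| ≤ |Φ s (n - (n / 2 + t))| +
      (6 * lam + 6) ^ (t + 1) * (Real.sqrt (4 * Real.pi * lam) * Real.exp (-c * |(n:ℝ)| / 2)) := by
  obtain ⟨E, hE⟩ := he s
  have hG : ∀ j, |amoPot lam α θ j| ≤ 2 * lam := by
    intro j
    unfold amoPot
    rw [abs_mul, abs_of_pos (by linarith : 0 < 2 * lam)]
    have := Real.abs_cos_le_one (2 * Real.pi * (θ + j * α))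
    nlinarith
  have hEb := amo_E_bound _ _ E (2 * lam) hE (amo_sum_k Φ s) hG
  have := amo_refl (amoPot lam α θ) (fun n => Φ s n) E (6 * lam + 4) n
    (Real.sqrt (4 * Real.pi * lam) * Real.exp (-c * |(n:ℝ)| / 2)) (by positivity) hE (amo_sum_k Φ s)
    (by linarith) (fun j => by
      have := abs_sub E (amoPot lam α θ j)
      have := hG j
      linarith) (fun j => by
      refine (amo_pot_close lam α θ (by linarith) n j).trans ?_
      have hl : 0 ≤ 4 * Real.pi * lam := by positivity
      rw [mul_pow, Real.sq_sqrt hl, ← Real.exp_nat_mul]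
      refine (mul_le_mul_of_nonneg_left hn hl).trans (le_of_eq ?_)
      congr 2
      push_cast; ring) t
  rw [show 6 * lam + 4 + 2 = 6 * lam + 6 by ring] at this
  exact this

set_option maxHeartbeats 1000000

theorem amo_no_SULE_of_deltaPhase_pos
    (lam α θ : ℝ) (hlam : 1 < lam) (hα : IsDiophantine α)
    (hδpos : 0 < deltaPhase α θ) (hδ : deltaPhase α θ < Real.log lam) :
    ¬ HasSULE (amoPot lam α θ) := by
  rintro ⟨Φ, ns, γ, hγ, he, hsule⟩
  obtain ⟨c, hc, hfreq⟩ := amo_freq α θ hδpos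
  set Q := 6 * lam + 6 with hQ
  have hlQ : 0 < Real.log Q := Real.log_pos (by linarith)
  set η := min 1 (c / (4 * Real.log Q)) with hη
  have hη0 : 0 < η := lt_min one_pos (by positivity)
  have hη1 : η ≤ 1 := min_le_left _ _
  have hηQ : η * Real.log Q ≤ c / 4 := by
    have : η ≤ c / (4 * Real.log Q) := min_le_right _ _
    rw [le_div_iff₀ (by positivity)] at this
    linarith
  set r := γ / 2 with hr
  have hr0 : 0 < r := by positivity
  set ε := min (γ / 4) (min (r * η / 36) (c / 96)) with hεdef
  have hε0 : 0 < ε := lt_min (by positivity) (lt_min (by positivity) (by positivity))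
  have hε1 : ε ≤ γ / 4 := min_le_left _ _
  have hε2 : ε ≤ r * η / 36 := (min_le_right _ _).trans (min_le_left _ _)
  have hε3 : ε ≤ c / 96 := (min_le_right _ _).trans (min_le_right _ _)
  obtain ⟨C, hC⟩ := hsule ε hε0
  set K := ∑' k : ℤ, Real.exp (-(γ/4) * |(k:ℝ)|) with hK
  have hsm := (amo_geom (γ/4) (by positivity) 0).1
  have hK0 : 0 < K := by
    refine Summable.tsum_pos (by simpa using hsm) (fun _ => (Real.exp_pos _).le) 0 (Real.exp_pos _)
  have hC1 : 0 < |C| + 1 := by positivity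
  set c1 := 1 / (2 * (|C| + 1) * K) with hc1
  have hc10 : 0 < c1 := by positivity
  set B := Q ^ 2 * Real.sqrt (4 * Real.pi * lam) with hB
  have hB0 : 0 ≤ B := by positivity
  set A := (|C| + 1) ^ 2 with hA
  have hA0 : 0 < A := by positivity
  set ρ := min (r * η / 2) (c / 8) with hρ
  have hρ0 : 0 < ρ := lt_min (by positivity) (by positivity)
  obtain ⟨n, hn1, hn2⟩ := hfreq (max 1 (Real.log ((A + B) / c1 ^ 4) / ρ + 1))
  set N := |(n:ℝ)| with hN
  have hN1 : 1 ≤ N := (le_max_left _ _).trans hn1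
  have hN2 : Real.log ((A + B) / c1 ^ 4) / ρ + 1 ≤ N := (le_max_right _ _).trans hn1
  set t := ⌈η * N⌉₊ with ht
  have ht1 : η * N ≤ t := Nat.le_ceil _
  have ht2 : (t:ℝ) < η * N + 1 := Nat.ceil_lt_add_one (by positivity)
  have htpos : 1 ≤ t := Nat.one_le_ceil_iff.2 (by positivity)
  set m : ℤ := n / 2 + t with hm
  have hηN : η * N ≤ N := by nlinarith
  have hmN : |(m:ℝ)| ≤ 3 * N := by
    have h1 : |n / 2| ≤ |n| := by
      rcases abs_cases n with h | h <;> rcases abs_cases (n / 2) with h' | h' <;> omega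
    have h1' : |((n / 2 : ℤ):ℝ)| ≤ N := by rw [hN]; exact_mod_cast h1
    have h2 : (m:ℝ) = ((n/2 : ℤ):ℝ) + t := by rw [hm]; push_cast; rfl
    rw [h2]
    have := abs_add_le ((n/2 : ℤ):ℝ) (t:ℝ)
    rw [abs_of_nonneg (Nat.cast_nonneg t : (0:ℝ) ≤ t)] at this
    linarith
  have hmm : η * N ≤ |(m:ℝ) - ((n - m : ℤ):ℝ)| := by
    refine ht1.trans ((?_ : (t:ℝ) ≤ (m:ℝ) - ((n - m : ℤ):ℝ)).trans (le_abs_self _))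
    have : (t:ℤ) ≤ m - (n - m) := by omega
    exact_mod_cast this
  have hsemi := fun s k => amo_semi (fun s n => Φ s n) ns γ ε C hε0 (by linarith) hC s m k
  have hex0 : 0 < Real.exp (ε * |(m:ℝ)|) := Real.exp_pos _
  obtain ⟨s, hs⟩ := amo_exists Φ m (γ/4) ((|C| + 1) * Real.exp (ε * |(m:ℝ)|))
    (c1 * Real.exp (-(ε * |(m:ℝ)|))) (by positivity) (by positivity) (by positivity) hsemi (by
      rw [← hK, Real.exp_neg, hc1]
      field_simp
      norm_num)
  have h1 := amo_step lam α θ hlam Φ he n c hn2 s t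
  have h2 := hsemi s (n - m)
  have h3 := amo_abs_le_one _ (amo_sum_k Φ s) m
  rw [← hm, ← hQ, ← hN] at h1
  have ha0 := abs_nonneg (Φ s m)
  set a := |Φ s m| with ha
  have hQt : Q ^ (t+1) * (Real.sqrt (4 * Real.pi * lam) * Real.exp (-c * N / 2)) ≤ B * Real.exp (-(c/4) * N) := by
    have hQ0 : 0 < Q := by linarith
    have e1 : Q ^ (t+1) ≤ Q ^ 2 * Real.exp (c/4 * N) := by
      have : Q ^ (t+1) = Real.exp (((t+1 : ℕ):ℝ) * Real.log Q) := by
        rw [Real.exp_nat_mul, Real.exp_log hQ0]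
      have e2 : Q ^ 2 = Real.exp (((2 : ℕ):ℝ) * Real.log Q) := by
        rw [Real.exp_nat_mul, Real.exp_log hQ0]
      rw [this, e2, ← Real.exp_add]
      apply Real.exp_le_exp.2
      push_cast
      nlinarith
    calc _ ≤ Q ^ 2 * Real.exp (c/4 * N) * (Real.sqrt (4 * Real.pi * lam) * Real.exp (-c * N / 2)) :=
          mul_le_mul_of_nonneg_right e1 (by positivity)
      _ = B * (Real.exp (c/4 * N) * Real.exp (-c * N / 2)) := by rw [hB]; ring
      _ = _ := by rw [← Real.exp_add]; congr 2; ring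
  have h4 : a ^ 2 ≤ A * Real.exp (6 * ε * N - r * η * N) + B * Real.exp (-(c/4) * N) := by
    have h5 : a * |Φ s (n - m)| ≤ A * Real.exp (6 * ε * N - r * η * N) := by
      refine h2.trans ?_
      rw [mul_assoc, ← Real.exp_add, mul_pow, ← Real.exp_nat_mul]
      refine mul_le_mul_of_nonneg_left (Real.exp_le_exp.2 ?_) (by positivity)
      have q1 := mul_le_mul_of_nonneg_left hmN hε0.le
      have q2 := mul_le_mul_of_nonneg_left hmm hr0.le
      rw [hr] at q2 ⊢
      push_cast at q2 ⊢
      linarith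
    have h6 : 0 ≤ B * Real.exp (-(c/4) * N) := by positivity
    have h7 := mul_le_mul_of_nonneg_left (h1.trans (add_le_add_right hQt _)) ha0
    have h8 := mul_le_of_le_one_left h6 h3
    rw [mul_add] at h7
    rw [pow_two]
    linarith
  have h5 : c1 ^ 4 * Real.exp (-12 * ε * N) ≤ a ^ 2 := by
    calc c1 ^ 4 * Real.exp (-12 * ε * N) ≤ c1 ^ 4 * Real.exp (((4:ℕ):ℝ) * -(ε * |(m:ℝ)|)) := by
          refine mul_le_mul_of_nonneg_left (Real.exp_le_exp.2 ?_) (by positivity)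
          have q1 := mul_le_mul_of_nonneg_left hmN hε0.le
          push_cast
          linarith
      _ = ((c1 * Real.exp (-(ε * |(m:ℝ)|))) ^ 2) ^ 2 := by rw [Real.exp_nat_mul]; ring
      _ ≤ a ^ 2 := pow_le_pow_left₀ (by positivity) hs.le 2
  have hN0 : 0 ≤ N := by linarith
  have h6 : c1 ^ 4 ≤ (A + B) * Real.exp (-ρ * N) := by
    have h7 := mul_le_mul_of_nonneg_right (h5.trans h4) (Real.exp_pos (12 * ε * N)).le
    rw [mul_assoc (c1 ^ 4), ← Real.exp_add, add_mul, mul_assoc A, ← Real.exp_add, mul_assoc B,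
      ← Real.exp_add, show -12 * ε * N + 12 * ε * N = 0 by ring, Real.exp_zero, mul_one] at h7
    refine h7.trans ?_
    rw [add_mul]
    have r1 : ρ ≤ r * η / 2 := min_le_left _ _
    have r2 : ρ ≤ c / 8 := min_le_right _ _
    refine add_le_add (mul_le_mul_of_nonneg_left (Real.exp_le_exp.2 ?_) hA0.le)
      (mul_le_mul_of_nonneg_left (Real.exp_le_exp.2 ?_) hB0)
    · have : 18 * ε - r * η ≤ -ρ := by linarith
      have := mul_le_mul_of_nonneg_right this hN0
      linarith
    · have : 12 * ε - c/4 ≤ -ρ := by linarith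
      have := mul_le_mul_of_nonneg_right this hN0
      linarith
  have h8 : Real.log ((A + B) / c1 ^ 4) < ρ * N := by
    have : Real.log ((A + B) / c1 ^ 4) / ρ < N := by linarith
    rw [div_lt_iff₀ hρ0] at this
    linarith
  rw [Real.log_lt_iff_lt_exp (by positivity), div_lt_iff₀ (by positivity)] at h8
  have h9 := mul_le_mul_of_nonneg_left h6 (Real.exp_pos (ρ * N)).le
  have h10 : Real.exp (ρ * N) * ((A + B) * Real.exp (-ρ * N)) = A + B := by
    rw [show -ρ * N = -(ρ * N) by ring, Real.exp_neg]
    field_simp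
  linarith
end
end

section
/- Suppose H on ℓ²(ℤ) has SULE, with normalized eigenfunctions {φ_s} (‖φ_s‖ = 1), centers n_s ∈ ℤ, and decay rate γ > 0 as in the SULE definition. For each s let m_s ∈ ℤ be any global maximum of |φ_s|. Then for any ε > 0 there exists N such that whenever |n_s| ≥ N one has |m_s − n_s| ≤ ε|m_s| and |m_s − n_s| ≤ ε|n_s|. -/
noncomputable section

open Filter Real

theorem summable_aux (γ : ℝ) (hγ : 0 < γ) :
    Summable (fun k : ℤ => Real.exp (-γ * |(k : ℝ)|)) := by
  have h : Summable (fun n : ℕ => Real.exp (-γ * (n : ℝ))) := by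
    have := Real.summable_exp_nat_mul_iff.mpr (neg_lt_zero.mpr hγ)
    simpa [mul_comm] using this
  refine Summable.of_nat_of_neg ?_ ?_
  · simpa using h
  · simpa using h

theorem key_aux (f : lp (fun _ : ℤ => ℝ) 2) (hf : ‖f‖ = 1) (γ : ℝ) (hγ : 0 < γ)
    (c : ℤ) (D : ℝ) (hD : ∀ n : ℤ, |f n| ≤ D * Real.exp (-γ * |(n : ℝ) - (c : ℝ)|))
    (m : ℤ) (hm : ∀ n : ℤ, |f n| ≤ |f m|) :
    Real.exp (γ * |(m : ℝ) - (c : ℝ)|) ≤ D * (D * ∑' k : ℤ, Real.exp (-γ * |(k : ℝ)|)) := by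
  have h1 : HasSum (fun n : ℤ => |f n| ^ 2) 1 := by
    have := lp.hasSum_norm (p := 2) (by norm_num) f
    simpa [hf] using this
  have h2 : HasSum (fun n : ℤ => Real.exp (-γ * |(n : ℝ) - (c : ℝ)|))
      (∑' k : ℤ, Real.exp (-γ * |(k : ℝ)|)) := by
    have := (Equiv.subRight c).hasSum_iff.mpr (summable_aux γ hγ).hasSum
    simpa [Function.comp_def] using this
  have h3 := (h2.mul_left D).mul_left |f m|
  have h4 := hasSum_le (fun n => by
    have := mul_le_mul (hm n) (hD n) (abs_nonneg _) (abs_nonneg _)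
    rw [← pow_two] at this
    exact this) h1 h3
  set K := ∑' k : ℤ, Real.exp (-γ * |(k : ℝ)|)
  have hK : 0 ≤ K := tsum_nonneg fun _ => (Real.exp_pos _).le
  have hD0 : 0 ≤ D := by
    have := (abs_nonneg _).trans (hD c)
    simpa using this
  have h5 : 1 ≤ (D * Real.exp (-γ * |(m : ℝ) - (c : ℝ)|)) * (D * K) :=
    h4.trans (mul_le_mul_of_nonneg_right (hD m) (by positivity))
  calc Real.exp (γ * |(m : ℝ) - (c : ℝ)|) = Real.exp (γ * |(m : ℝ) - (c : ℝ)|) * 1 := by ring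
    _ ≤ Real.exp (γ * |(m : ℝ) - (c : ℝ)|) *
        ((D * Real.exp (-γ * |(m : ℝ) - (c : ℝ)|)) * (D * K)) := by gcongr
    _ = (Real.exp (γ * |(m : ℝ) - (c : ℝ)|) * Real.exp (-γ * |(m : ℝ) - (c : ℝ)|)) *
        (D * (D * K)) := by ring
    _ = D * (D * K) := by rw [← Real.exp_add]; simp

theorem SULE_maxima_near_centers
    (H : lp (fun _ : ℤ => ℝ) 2 →L[ℝ] lp (fun _ : ℤ => ℝ) 2)
    (Φ : HilbertBasis ℕ ℝ (lp (fun _ : ℤ => ℝ) 2)) (ns : ℕ → ℤ) (γ : ℝ)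
    (hγ : 0 < γ)
    (heig : ∀ s : ℕ, ∃ E : ℝ, H (Φ s) = E • (Φ s : lp (fun _ : ℤ => ℝ) 2))
    (hnorm : ∀ s : ℕ, ‖(Φ s : lp (fun _ : ℤ => ℝ) 2)‖ = 1)
    (hSULE : ∀ ε : ℝ, 0 < ε → ∃ C : ℝ, ∀ (s : ℕ) (n : ℤ),
      |Φ s n| ≤ C * Real.exp (ε * |(ns s : ℝ)|) * Real.exp (-γ * |(n : ℝ) - (ns s : ℝ)|))
    (m : ℕ → ℤ) (hm : ∀ (s : ℕ) (n : ℤ), |Φ s n| ≤ |Φ s (m s)|)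
    (ε : ℝ) (hε : 0 < ε) :
    ∃ N : ℝ, ∀ s : ℕ, N ≤ |(ns s : ℝ)| →
      |(m s : ℝ) - (ns s : ℝ)| ≤ ε * |(m s : ℝ)| ∧
      |(m s : ℝ) - (ns s : ℝ)| ≤ ε * |(ns s : ℝ)| := by
  obtain ⟨e, he0, he1, he2⟩ : ∃ e : ℝ, 0 < e ∧ e ≤ ε / 2 ∧ e ≤ 1 / 2 :=
    ⟨min (ε / 2) (1 / 2), by positivity, min_le_left _ _, min_le_right _ _⟩
  obtain ⟨C, hC⟩ := hSULE (γ * e / 4) (by positivity)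
  set K := ∑' k : ℤ, Real.exp (-γ * |(k : ℝ)|) with hKdef
  refine ⟨2 * (C * (C * K)) / (γ * e), fun s hs => ?_⟩
  have hk := key_aux (Φ s) (hnorm s) γ hγ (ns s) _ (hC s) (m s) (hm s)
  rw [← hKdef] at hk
  set L := |(ns s : ℝ)| with hL
  set d := |(m s : ℝ) - (ns s : ℝ)| with hd
  have hL0 : 0 ≤ L := abs_nonneg _
  have h1 : Real.exp (γ * d - γ * e / 2 * L) ≤ C * (C * K) := by
    have h2 : Real.exp (γ * d - γ * e / 2 * L)
        = Real.exp (γ * d) * Real.exp (-(γ * e / 2 * L)) := by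
      rw [← Real.exp_add]; ring_nf
    have h3 : Real.exp (γ * e / 4 * L) * Real.exp (γ * e / 4 * L)
        * Real.exp (-(γ * e / 2 * L)) = 1 := by
      rw [← Real.exp_add, ← Real.exp_add, Real.exp_eq_one_iff]; ring
    rw [h2]
    refine (mul_le_mul_of_nonneg_right hk (Real.exp_pos _).le).trans (le_of_eq ?_)
    linear_combination C * (C * K) * h3
  have h4 := Real.add_one_le_exp (γ * d - γ * e / 2 * L)
  have h5 : 2 * (C * (C * K)) ≤ L * (γ * e) := (div_le_iff₀ (by positivity)).mp hs
  have h6 : d ≤ e * L := by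
    refine le_of_mul_le_mul_left ?_ hγ
    nlinarith
  have h7 : L ≤ |(m s : ℝ)| + d := by
    have := abs_sub_abs_le_abs_sub (ns s : ℝ) (m s : ℝ)
    rw [abs_sub_comm] at this
    linarith
  constructor
  · have h8 : e * L ≤ 1 / 2 * L := mul_le_mul_of_nonneg_right he2 hL0
    have h9 : L ≤ 2 * |(m s : ℝ)| := by linarith
    have h10 := mul_le_mul_of_nonneg_left h9 he0.le
    have h11 := mul_le_mul_of_nonneg_right he1 (abs_nonneg (m s : ℝ))
    linarith
  · nlinarith
end
end
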